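/- Let V be a nonempty finite set and f : 2^V → ℝ a normalized monotone submodular set function. If P and Q are both decomposers of the game (V, f), then their common refinement P ∧ Q = { C ∩ D : C ∈ P, D ∈ Q, C ∩ D ≠ ∅ } is also a decomposer of (V, f), i.e. f(V) = ∑_{E ∈ P∧Q} f(E). In particular, a decomposable game has a unique finest decomposer. -/

import Mathlib

open Finset

/-- Adding the members of `T` to `X` one at a time, each gains at most `f D - f (X ∩ D)`. -/
lemma sum_inter_add_union_sup_le {V : Type*} [DecidableEq V] (f : Finset V → ℝ)
    (hmono : ∀ X Y : Finset V, Y ⊆ X → f Y ≤ f X)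
    (hsub : ∀ X Y : Finset V, f (X ∩ Y) + f (X ∪ Y) ≤ f X + f Y)
    (X : Finset V) (T : Finset (Finset V)) :
    ∑ D ∈ T, f (X ∩ D) + f (X ∪ T.sup id) ≤ ∑ D ∈ T, f D + f X := by
  induction T using Finset.induction_on with
  | empty => simp
  | insert D T hD ih =>
    have hunion : X ∪ (insert D T).sup id = (X ∪ T.sup id) ∪ D := by
      simp only [sup_insert, id_eq, sup_eq_union, union_comm D, union_assoc]
    have hstep := hsub (X ∪ T.sup id) D
    have hle := hmono ((X ∪ T.sup id) ∩ D) (X ∩ D)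
      (inter_subset_inter_right subset_union_left)
    rw [sum_insert hD, sum_insert hD, hunion]
    linarith

/-- A normalized monotone submodular function is subadditive over finite unions. -/
lemma inter_sup_le_sum_inter {V : Type*} [DecidableEq V] (f : Finset V → ℝ)
    (hnorm : f ∅ = 0) (hmono : ∀ X Y : Finset V, Y ⊆ X → f Y ≤ f X)
    (hsub : ∀ X Y : Finset V, f (X ∩ Y) + f (X ∪ Y) ≤ f X + f Y)
    (X : Finset V) (T : Finset (Finset V)) :
    f (X ∩ T.sup id) ≤ ∑ D ∈ T, f (X ∩ D) := by
  induction T using Finset.induction_on with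
  | empty => simp [hnorm]
  | insert D T hD ih =>
    have hunion : X ∩ (insert D T).sup id = (X ∩ D) ∪ (X ∩ T.sup id) := by
      simp only [sup_insert, id_eq, sup_eq_union, inter_union_distrib_left]
    have hstep := hsub (X ∩ D) (X ∩ T.sup id)
    have hnonneg := hmono ((X ∩ D) ∩ (X ∩ T.sup id)) ∅ (empty_subset _)
    rw [sum_insert hD, hunion]
    linarith

/-- A decomposer of the ground set splits the value of every subset. -/
lemma eq_sum_inter_of_decomposer {V : Type*} [Fintype V] [DecidableEq V] (f : Finset V → ℝ)
    (hnorm : f ∅ = 0) (hmono : ∀ X Y : Finset V, Y ⊆ X → f Y ≤ f X)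
    (hsub : ∀ X Y : Finset V, f (X ∩ Y) + f (X ∪ Y) ≤ f X + f Y)
    (Q : Finset (Finset V)) (hQcover : Q.sup id = univ) (hQdec : f univ = ∑ C ∈ Q, f C)
    (X : Finset V) : f X = ∑ D ∈ Q, f (X ∩ D) := by
  have hle := inter_sup_le_sum_inter f hnorm hmono hsub X Q
  have hge := sum_inter_add_union_sup_le f hmono hsub X Q
  rw [hQcover, inter_univ] at hle
  rw [hQcover, union_eq_right.mpr (subset_univ X)] at hge
  linarith

/-- If `P` and `Q` are decomposers of the normalized monotone submodular game
`(V, f)`, then their common refinement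
`P ∧ Q = { C ∩ D : C ∈ P, D ∈ Q, C ∩ D ≠ ∅ }` is also a decomposer. -/
theorem common_refinement_decomposer
    {V : Type*} [Fintype V] [DecidableEq V] [Nonempty V]
    (f : Finset V → ℝ)
    (hnorm : f ∅ = 0)
    (hmono : ∀ X Y : Finset V, Y ⊆ X → f Y ≤ f X)
    (hsub : ∀ X Y : Finset V, f (X ∩ Y) + f (X ∪ Y) ≤ f X + f Y)
    (P Q : Finset (Finset V))
    (hPne : ∀ C ∈ P, C.Nonempty)
    (hPdisj : ∀ C ∈ P, ∀ D ∈ P, C ≠ D → Disjoint C D)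
    (hPcover : P.sup id = Finset.univ)
    (hPdec : f Finset.univ = ∑ C ∈ P, f C)
    (hQne : ∀ C ∈ Q, C.Nonempty)
    (hQdisj : ∀ C ∈ Q, ∀ D ∈ Q, C ≠ D → Disjoint C D)
    (hQcover : Q.sup id = Finset.univ)
    (hQdec : f Finset.univ = ∑ C ∈ Q, f C) :
    f Finset.univ
      = ∑ E ∈ (((P ×ˢ Q).image fun p => p.1 ∩ p.2).filter fun E => E.Nonempty),
          f E := by
  have hinj : Set.InjOn (fun p : Finset V × Finset V => p.1 ∩ p.2)
      ((P ×ˢ Q).filter fun p => (p.1 ∩ p.2).Nonempty) := by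
    rintro ⟨C, D⟩ hCD ⟨C', D'⟩ hCD' heq
    simp only [coe_filter, mem_product, Set.mem_ofPred_eq] at hCD hCD' heq
    obtain ⟨⟨hC, hD⟩, x, hx⟩ := hCD
    have hx' := heq ▸ hx
    rw [mem_inter] at hx hx'
    have hCC' : C = C' := by
      by_contra hne
      exact disjoint_left.mp (hPdisj C hC C' hCD'.1.1 hne) hx.1 hx'.1
    have hDD' : D = D' := by
      by_contra hne
      exact disjoint_left.mp (hQdisj D hD D' hCD'.1.2 hne) hx.2 hx'.2
    rw [hCC', hDD']
  rw [filter_image, sum_image hinj, sum_filter_of_ne, sum_product, hPdec]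
  · exact sum_congr rfl fun C _ =>
      eq_sum_inter_of_decomposer f hnorm hmono hsub Q hQcover hQdec C
  · intro p _ hp
    rw [nonempty_iff_ne_empty]
    exact fun hempty => hp (by rw [hempty, hnorm])
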